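/- Let n ≥ 3. Then the span in ℝ^{C(n,2)} of the set {a(T) : T a spanning tree of the complete graph on {1,…,n}} is all of ℝ^{C(n,2)}. -/

import Mathlib

/-!
Moving the leaf `v` of the star centred at `c` below another vertex `u` gives a tree again, and the
two tree vectors differ by `e_{cv} - e_{uv}` (`treeVec_star_sub`). So the basis vectors of any two
edges sharing a vertex agree modulo the span. The star at `c` is the sum of the `n - 1` basis
vectors of the edges at `c` (`treeVec_star`), hence congruent to `(n - 1) e_{cv}` for any `v ≠ c`;
as `n - 1 ≠ 0`, every basis vector lies in the span.
-/

/-- Unordered pairs of distinct elements of `Fin n`, represented as ordered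
pairs `(i, j)` with `i < j`; there are `n.choose 2` of them. -/
abbrev PairIdx (n : ℕ) := {p : Fin n × Fin n // p.1 < p.2}

open Classical in
/-- The tree vector `a(T) ∈ ℝ^{C(n,2)}` of a graph `T` on `{1,…,n}`: the
coordinate at the pair `{i,j}` is `1` if `{i,j}` is an edge of `T`, else `0`. -/
noncomputable def treeVec (n : ℕ) (T : SimpleGraph (Fin n)) : PairIdx n → ℝ :=
  fun p => if T.Adj p.1.1 p.1.2 then 1 else 0

/-- For `v ≠ c` and `u ≠ v`, the tree rooted at `c` in which `v` hangs below `u` and every other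
vertex hangs directly below `c`. For `u = c` it is the star with centre `c`. -/
def hangTree {n : ℕ} (c u v : Fin n) : SimpleGraph (Fin n) :=
  SimpleGraph.fromEdgeSet ((fun x => s(x, if x = v then u else c)) '' {x | x ≠ c})

lemma hangTree_adj {n : ℕ} (c u v x y : Fin n) :
    (hangTree c u v).Adj x y ↔
      x ≠ y ∧ ((x ≠ c ∧ y = if x = v then u else c) ∨ (y ≠ c ∧ x = if y = v then u else c)) := by
  simp only [hangTree, SimpleGraph.fromEdgeSet_adj, Set.mem_image, Set.mem_ofPred_eq, Sym2.eq_iff]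
  constructor
  · rintro ⟨⟨z, hz, ⟨rfl, rfl⟩ | ⟨rfl, rfl⟩⟩, hne⟩
    · exact ⟨hne, Or.inl ⟨hz, rfl⟩⟩
    · exact ⟨hne, Or.inr ⟨hz, rfl⟩⟩
  · rintro ⟨hne, ⟨hx, hy⟩ | ⟨hy, hx⟩⟩
    · exact ⟨⟨x, hx, Or.inl ⟨rfl, hy.symm⟩⟩, hne⟩
    · exact ⟨⟨y, hy, Or.inr ⟨rfl, hx.symm⟩⟩, hne⟩

/-- Every vertex reaches the root, and there are at most `n - 1` edges, one for each non-root. -/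
lemma hangTree_isTree {n : ℕ} {c u v : Fin n} (hvc : v ≠ c) (huv : u ≠ v) :
    (hangTree c u v).IsTree := by
  have key : ∀ x, x ≠ v → (hangTree c u v).Reachable x c := by
    intro x hx
    by_cases hxc : x = c
    · subst hxc; rfl
    · exact SimpleGraph.Adj.reachable (by rw [hangTree_adj]; simp [hx, hxc])
  have all : ∀ x, (hangTree c u v).Reachable x c := by
    intro x
    by_cases hx : x = v
    · subst hx
      refine SimpleGraph.Reachable.trans (SimpleGraph.Adj.reachable ?_) (key u huv)
      rw [hangTree_adj]; simp [hvc, huv.symm]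
    · exact key x hx
  have hconn : (hangTree c u v).Connected :=
    { preconnected := fun x y => (all x).trans (all y).symm, nonempty := ⟨c⟩ }
  rw [SimpleGraph.isTree_iff_connected_and_card]
  refine ⟨hconn, le_antisymm ?_ hconn.card_vert_le_card_edgeSet_add_one⟩
  have h1 : Nat.card (hangTree c u v).edgeSet ≤ ({x : Fin n | x ≠ c}).ncard := by
    rw [Nat.card_coe_set_eq]
    refine le_trans (Set.ncard_le_ncard ?_ (Set.toFinite _))
      (Set.ncard_image_le (f := fun x => s(x, if x = v then u else c)) (Set.toFinite _))
    rw [hangTree, SimpleGraph.edgeSet_fromEdgeSet]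
    exact Set.sdiff_subset
  have h2 : ({x : Fin n | x ≠ c}).ncard + 1 = Nat.card (Fin n) := by
    have := Set.ncard_add_ncard_compl ({c} : Set (Fin n))
    rw [Set.ncard_singleton, add_comm] at this
    exact this
  omega

/-- The standard basis vector of the edge `{u, v}`, as a function of the ordered pair `(u, v)`;
it is `0` when `u = v`. -/
def edgeVec {n : ℕ} (u v : Fin n) : PairIdx n → ℝ :=
  fun p => if s(p.1.1, p.1.2) = s(u, v) then 1 else 0

lemma edgeVec_comm {n : ℕ} (u v : Fin n) : edgeVec u v = edgeVec v u := by
  unfold edgeVec; rw [Sym2.eq_swap]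

/-- Moving the leaf `v` of the star at `c` below `u` exchanges the edge `{c, v}` for `{u, v}`. -/
lemma treeVec_star_sub {n : ℕ} {c u v : Fin n} (hvc : v ≠ c) (huv : u ≠ v) (huc : u ≠ c) :
    treeVec n (hangTree c c v) - treeVec n (hangTree c u v) = edgeVec c v - edgeVec u v := by
  ext ⟨⟨x, y⟩, hxy⟩
  have hne : x ≠ y := ne_of_lt hxy
  simp only [Pi.sub_apply, treeVec, edgeVec, hangTree_adj, Sym2.eq_iff]
  grind

lemma treeVec_star {n : ℕ} {c v : Fin n} :
    treeVec n (hangTree c c v) = ∑ x ∈ Finset.univ.erase c, edgeVec c x := by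
  ext ⟨⟨x, y⟩, hxy⟩
  have hne : x ≠ y := ne_of_lt hxy
  simp only [Finset.sum_apply, treeVec, edgeVec, hangTree_adj, Sym2.eq_iff, ite_self]
  by_cases hx : x = c
  · subst hx
    rw [Finset.sum_eq_single y] <;> grind
  · by_cases hy : y = c
    · subst hy
      rw [Finset.sum_eq_single x] <;> grind
    · rw [Finset.sum_eq_zero] <;> grind

/-- For `n ≥ 3`, the span in `ℝ^{C(n,2)}` of the tree vectors of all spanning
trees of the complete graph on `{1,…,n}` is all of `ℝ^{C(n,2)}`. -/
theorem maxTreeSpace_complete (n : ℕ) (hn : 3 ≤ n) :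
    Submodule.span ℝ
        {v : PairIdx n → ℝ | ∃ T : SimpleGraph (Fin n), T.IsTree ∧ v = treeVec n T}
      = ⊤ := by
  set S := Submodule.span ℝ
    {v : PairIdx n → ℝ | ∃ T : SimpleGraph (Fin n), T.IsTree ∧ v = treeVec n T} with hS
  have htree : ∀ c u v : Fin n, v ≠ c → u ≠ v → treeVec n (hangTree c u v) ∈ S :=
    fun c u v h1 h2 => Submodule.subset_span ⟨_, hangTree_isTree h1 h2, rfl⟩
  have hdiff : ∀ c x v : Fin n, x ≠ c → v ≠ c → edgeVec c x - edgeVec c v ∈ S := by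
    intro c x v hx hv
    by_cases hxv : x = v
    · subst hxv; simp
    · rw [edgeVec_comm c x, edgeVec_comm c v, ← treeVec_star_sub hx.symm hv (Ne.symm hxv)]
      exact S.sub_mem (htree _ _ _ hx.symm hx) (htree _ _ _ hx.symm hv)
  have hedge : ∀ c v : Fin n, v ≠ c → edgeVec c v ∈ S := by
    intro c v hv
    -- The star at `c` is `n - 1` copies of the edge `{c, v}`, up to differences lying in `S`.
    have h1 : ((n - 1 : ℕ) : ℝ) • edgeVec c v ∈ S := by
      have h2 : ((n - 1 : ℕ) : ℝ) • edgeVec c v = treeVec n (hangTree c c v)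
          - ∑ x ∈ Finset.univ.erase c, (edgeVec c x - edgeVec c v) := by
        rw [treeVec_star, Finset.sum_sub_distrib, Finset.sum_const,
          Finset.card_erase_of_mem (Finset.mem_univ c), Finset.card_univ, Fintype.card_fin,
          sub_sub_cancel, Nat.cast_smul_eq_nsmul]
      rw [h2]
      exact S.sub_mem (htree c c v hv hv.symm)
        (S.sum_mem fun x hx => hdiff c x v (Finset.ne_of_mem_erase hx) hv)
    exact (S.smul_mem_iff (Nat.cast_ne_zero.mpr (by omega))).mp h1
  rw [eq_top_iff]
  intro f _
  have hf : f = ∑ p : PairIdx n, f p • edgeVec p.1.1 p.1.2 := by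
    ext q
    rw [Finset.sum_apply, Finset.sum_eq_single q]
    · simp [edgeVec]
    · rintro ⟨⟨x, y⟩, hp⟩ - hpq
      obtain ⟨⟨a, b⟩, hq⟩ := q
      simp only [Pi.smul_apply, edgeVec, Sym2.eq_iff]
      simp only [ne_eq, Subtype.mk.injEq, Prod.mk.injEq] at hpq
      have hp' : x < y := hp
      have hq' : a < b := hq
      rw [if_neg (by rintro (⟨rfl, rfl⟩ | ⟨rfl, rfl⟩); exacts [hpq ⟨rfl, rfl⟩, lt_asymm hp' hq'])]
      simp
    · simp
  rw [hf]
  exact S.sum_mem fun p _ => S.smul_mem _ (hedge _ _ (ne_of_gt p.2))
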